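/- Let c ∈ (0,1), α, β > 0, γ = α/(α + 2β), and suppose 2βc/α = Ī_c with Ī_c = c·exp(α/2) + (1 − c)·exp(−α/2). Then 1/(1 − γ) = (Ī_c + c)/Ī_c, and consequently for every η ∈ [0,1] the minimal conditional surrogate risk satisfies inf_{t ∈ ℝ} C₁(t, η) = (1/(1 − γ))·(2βc/α)^γ·I_η^{1−γ} = (Ī_c + c)·(I_η/Ī_c)^{1−γ}, where I_η = η·exp(−α/2) + (1 − η)·exp(α/2). -/

import Mathlib

/-- The surrogate rejection loss `ℓ₁(t, a) = exp(α(t − a)/2) + c·exp(−β t)`. -/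
noncomputable def surrogateRejectionLoss (c α β t a : ℝ) : ℝ :=
  Real.exp (α * (t - a) / 2) + c * Real.exp (-β * t)

/-- The conditional risk of the surrogate rejection loss:
`C₁(t, η) = η·ℓ₁(t, +1) + (1 − η)·ℓ₁(t, −1)`. -/
noncomputable def condRiskSurrogate (c α β t η : ℝ) : ℝ :=
  η * surrogateRejectionLoss c α β t 1 + (1 - η) * surrogateRejectionLoss c α β t (-1)

/-- `I_η = η·exp(−α/2) + (1 − η)·exp(α/2)`. -/
noncomputable def Ieta (α η : ℝ) : ℝ :=
  η * Real.exp (-α / 2) + (1 - η) * Real.exp (α / 2)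

/-- `Ī_c = c·exp(α/2) + (1 − c)·exp(−α/2)`. -/
noncomputable def Ibar (c α : ℝ) : ℝ :=
  c * Real.exp (α / 2) + (1 - c) * Real.exp (-α / 2)

/-!
The conditional risk is a sum of a growing and a decaying exponential in `t`. In the weighted
geometric mean of the two summands with weights `1 - γ` and `γ` the exponentials cancel, so it does
not depend on `t`. Weighted AM–GM therefore bounds the risk below by a constant, and the bound is
attained at the `t` for which the two averaged terms agree.
-/

open Real Set

section WeightedExponentials

variable {p q a b A B : ℝ}

theorem mul_exp_rpow_mul_mul_exp_neg_rpow (hA : 0 ≤ A) (hB : 0 ≤ B) (hpq : p * a = q * b) (t : ℝ) :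
    (A * exp (a * t)) ^ p * (B * exp (-b * t)) ^ q = A ^ p * B ^ q := by
  have hcancel : exp (a * t * p) * exp (-b * t * q) = 1 := by
    rw [← exp_add, exp_eq_one_iff]
    linear_combination t * hpq
  rw [mul_rpow hA (exp_nonneg _), mul_rpow hB (exp_nonneg _), ← exp_mul, ← exp_mul,
    mul_mul_mul_comm, hcancel, mul_one]

theorem exists_mul_exp_eq_mul_exp_neg (hA : 0 < A) (hB : 0 < B) (hab : a + b ≠ 0) :
    ∃ t, A * exp (a * t) = B * exp (-b * t) := by
  refine ⟨(log B - log A) / (a + b), ?_⟩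
  nth_rewrite 1 [← exp_log hA]
  nth_rewrite 2 [← exp_log hB]
  rw [← exp_add, ← exp_add, exp_eq_exp]
  field_simp
  ring

theorem isLeast_range_weighted_exp_add_exp_neg (hp : 0 ≤ p) (hq : 0 ≤ q) (hadd : p + q = 1)
    (hpq : p * a = q * b) (hab : a + b ≠ 0) (hA : 0 < A) (hB : 0 < B) :
    IsLeast (range fun t => p * (A * exp (a * t)) + q * (B * exp (-b * t))) (A ^ p * B ^ q) := by
  constructor
  · obtain ⟨t, ht⟩ := exists_mul_exp_eq_mul_exp_neg hA hB hab
    refine ⟨t, ?_⟩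
    have hpos : 0 < B * exp (-b * t) := by positivity
    calc p * (A * exp (a * t)) + q * (B * exp (-b * t))
        = B * exp (-b * t) := by rw [ht, ← add_mul, hadd, one_mul]
      _ = (A * exp (a * t)) ^ p * (B * exp (-b * t)) ^ q := by
        rw [ht, ← rpow_add hpos, hadd, rpow_one]
      _ = A ^ p * B ^ q := mul_exp_rpow_mul_mul_exp_neg_rpow hA.le hB.le hpq t
  · rintro _ ⟨t, rfl⟩
    rw [← mul_exp_rpow_mul_mul_exp_neg_rpow hA.le hB.le hpq t]
    exact geom_mean_le_arith_mean2_weighted hp hq (by positivity) (by positivity) hadd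

end WeightedExponentials

theorem div_mul_rpow_mul_rpow_one_sub {x y : ℝ} (hx : 0 ≤ x) (hy : 0 < y) (s r : ℝ) :
    s / y * y ^ r * x ^ (1 - r) = s * (x / y) ^ (1 - r) := by
  rw [div_rpow hx hy.le, rpow_sub hy, rpow_one]
  field_simp

theorem div_rpow_one_sub_mul_div_rpow {x y p : ℝ} (hx : 0 ≤ x) (hy : 0 ≤ y) (hp : 0 < p) (r : ℝ) :
    (x / p) ^ (1 - r) * (y / p) ^ r = 1 / p * y ^ r * x ^ (1 - r) := by
  have hpow : p ^ (1 - r) * p ^ r = p := by rw [← rpow_add hp, sub_add_cancel, rpow_one]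
  rw [div_rpow hx hp.le, div_rpow hy hp.le, div_mul_div_comm, hpow]
  ring

theorem Ieta_pos {η : ℝ} (α : ℝ) (hη : η ∈ Icc (0 : ℝ) 1) : 0 < Ieta α η :=
  convex_Ioi (0 : ℝ) (exp_pos (-α / 2)) (exp_pos (α / 2)) hη.1 (sub_nonneg.2 hη.2)
    (add_sub_cancel η 1)

theorem condRiskSurrogate_eq (c α β t η : ℝ) :
    condRiskSurrogate c α β t η = Ieta α η * exp (α / 2 * t) + c * exp (-β * t) := by
  have hpos : exp (α * (t - 1) / 2) = exp (-α / 2) * exp (α / 2 * t) := by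
    rw [← exp_add]; ring_nf
  have hneg : exp (α * (t - -1) / 2) = exp (α / 2) * exp (α / 2 * t) := by
    rw [← exp_add]; ring_nf
  rw [condRiskSurrogate, surrogateRejectionLoss, surrogateRejectionLoss, Ieta, hpos, hneg]
  ring

section Risk

variable {c α β : ℝ}

theorem one_sub_div_add_two_mul (hαβ : α + 2 * β ≠ 0) :
    1 - α / (α + 2 * β) = 2 * β / (α + 2 * β) := by
  rw [one_sub_div hαβ, add_sub_cancel_left]

theorem one_div_one_sub_div_add_two_mul (hc : c ≠ 0) (hα : α ≠ 0) (hβ : β ≠ 0)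
    (hαβ : α + 2 * β ≠ 0) :
    1 / (1 - α / (α + 2 * β)) = (2 * β * c / α + c) / (2 * β * c / α) := by
  rw [one_sub_div_add_two_mul hαβ]
  field_simp
  ring

theorem isLeast_range_condRiskSurrogate {η : ℝ} (hc : 0 < c) (hα : 0 < α) (hβ : 0 < β)
    (hI : 0 < Ieta α η) :
    IsLeast (range fun t => condRiskSurrogate c α β t η)
      (1 / (1 - α / (α + 2 * β)) * (2 * β * c / α) ^ (α / (α + 2 * β)) *
        Ieta α η ^ (1 - α / (α + 2 * β))) := by
  have hγ : 1 - α / (α + 2 * β) = 2 * β / (α + 2 * β) := one_sub_div_add_two_mul (by positivity)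
  set γ := α / (α + 2 * β) with hγ_def
  have hγ_pos : 0 < γ := by positivity
  have hone_sub_pos : 0 < 1 - γ := by rw [hγ]; positivity
  have hbalance : (1 - γ) * (α / 2) = γ * β := by
    rw [hγ, hγ_def]
    ring
  have hscale : 2 * β * c / α / (1 - γ) = c / γ := by
    rw [hγ, hγ_def]
    field_simp
  have hleast := isLeast_range_weighted_exp_add_exp_neg hone_sub_pos.le hγ_pos.le
    (sub_add_cancel 1 γ) hbalance (by positivity) (div_pos hI hone_sub_pos) (div_pos hc hγ_pos)
  rw [← div_rpow_one_sub_mul_div_rpow hI.le (by positivity) hone_sub_pos, hscale]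
  convert hleast using 4 with t
  rw [condRiskSurrogate_eq]
  field_simp

end Risk

theorem minimal_cond_surrogate_risk_formula_general {c α β : ℝ} (hc : 0 < c) (hα : 0 < α)
    (hβ : 0 < β) (hrel : 2 * β * c / α = Ibar c α) :
    1 / (1 - α / (α + 2 * β)) = (Ibar c α + c) / Ibar c α ∧
    ∀ η, 0 < Ieta α η →
      IsLeast (range fun t => condRiskSurrogate c α β t η)
        (1 / (1 - α / (α + 2 * β)) * (2 * β * c / α) ^ (α / (α + 2 * β)) *
          Ieta α η ^ (1 - α / (α + 2 * β))) ∧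
      IsLeast (range fun t => condRiskSurrogate c α β t η)
        ((Ibar c α + c) * (Ieta α η / Ibar c α) ^ (1 - α / (α + 2 * β))) := by
  have hfactor := one_div_one_sub_div_add_two_mul hc.ne' hα.ne' hβ.ne' (by positivity)
  refine ⟨hrel ▸ hfactor, fun η hI => ?_⟩
  have hleast := isLeast_range_condRiskSurrogate hc hα hβ hI
  refine ⟨hleast, ?_⟩
  rwa [hfactor, div_mul_rpow_mul_rpow_one_sub hI.le (by positivity), hrel] at hleast

/-- under the constraint `2βc/α = Ī_c`, with `γ = α/(α + 2β)` one has
`1/(1 − γ) = (Ī_c + c)/Ī_c`, and for every `η ∈ [0, 1]` the minimal conditional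
surrogate risk satisfies
`inf_t C₁(t, η) = (1/(1 − γ))·(2βc/α)^γ·I_η^{1−γ} = (Ī_c + c)·(I_η/Ī_c)^{1−γ}`. -/
theorem minimal_cond_surrogate_risk_formula (c α β : ℝ)
    (hc : 0 < c) (hc1 : c < 1) (hα : 0 < α) (hβ : 0 < β)
    (hrel : 2 * β * c / α = Ibar c α) :
    (1 / (1 - α / (α + 2 * β)) = (Ibar c α + c) / Ibar c α) ∧
    ∀ η ∈ Set.Icc (0 : ℝ) 1,
      sInf (Set.range fun t => condRiskSurrogate c α β t η)
        = (1 / (1 - α / (α + 2 * β))) * (2 * β * c / α) ^ (α / (α + 2 * β)) *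
            Ieta α η ^ (1 - α / (α + 2 * β)) ∧
      sInf (Set.range fun t => condRiskSurrogate c α β t η)
        = (Ibar c α + c) * (Ieta α η / Ibar c α) ^ (1 - α / (α + 2 * β)) := by
  obtain ⟨hfactor, hleast⟩ := minimal_cond_surrogate_risk_formula_general hc hα hβ hrel
  exact ⟨hfactor, fun η hη => (hleast η (Ieta_pos α hη)).imp IsLeast.csInf_eq IsLeast.csInf_eq⟩
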